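/- Suppose g ⊆ ω with g ∉ SSy(N), F : N^k → N is a function definable in N (with parameters), and p is a condition in the poset P. Then there exists a condition q ≤ p with n_q = n_p such that every tuple (σ₁, …, σ_k) ∈ (2^{n_q})^k corresponds to some i < ω with q ⊢ g(i) ≠ (F(x_{σ₁}, …, x_{σ_k}))_i, where (y)_i denotes the i-th binary digit of y. -/

import Mathlib

open FirstOrder FirstOrder.Language

/-- Function symbols of the language of arithmetic: `0`, `1`, `+`, `·`. -/
inductive arithFunc : ℕ → Type
  | zero : arithFunc 0
  | one : arithFunc 0
  | add : arithFunc 2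
  | mul : arithFunc 2
  deriving DecidableEq

/-- Relation symbols of the language of arithmetic: `<`. -/
inductive arithRel : ℕ → Type
  | lt : arithRel 2
  deriving DecidableEq

/-- The first-order language of arithmetic `{0, 1, +, ·, <}`. -/
def arith : FirstOrder.Language := ⟨arithFunc, arithRel⟩

namespace Arith

variable {M : Type*} [arith.Structure M]

/-- The interpretation of `0`. -/
def zeroM (M : Type*) [arith.Structure M] : M :=
  Structure.funMap (L := arith) arithFunc.zero ![]

/-- The interpretation of `1`. -/
def oneM (M : Type*) [arith.Structure M] : M :=
  Structure.funMap (L := arith) arithFunc.one ![]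

/-- The interpretation of `+`. -/
def addM (x y : M) : M := Structure.funMap (L := arith) arithFunc.add ![x, y]

/-- The interpretation of `·`. -/
def mulM (x y : M) : M := Structure.funMap (L := arith) arithFunc.mul ![x, y]

/-- The interpretation of `<`. -/
def ltM (x y : M) : Prop := Structure.RelMap (L := arith) arithRel.lt ![x, y]

/-- Non-strict order. -/
def leM (x y : M) : Prop := ltM x y ∨ x = y

/-- The numeral `n` in `M`: `0`, or `1 + 1 + ⋯ + 1`. -/
def numeral (M : Type*) [arith.Structure M] : ℕ → M
  | 0 => zeroM M
  | n + 1 => addM (numeral M n) (oneM M)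

/-- The standard `arith`-structure on `ℕ`. -/
instance : arith.Structure ℕ where
  funMap {n} f v :=
    match f with
    | .zero => 0
    | .one => 1
    | .add => v 0 + v 1
    | .mul => v 0 * v 1
  RelMap {n} r v :=
    match r with
    | .lt => v 0 < v 1

/-- `M` is a model of Peano arithmetic: it satisfies the finitely many basic axioms of
`PA` together with induction for all parametrically definable sets (which is equivalent
to the usual first-order induction scheme). -/
def IsPAModel (M : Type*) [arith.Structure M] : Prop :=
  (∀ x : M, addM x (zeroM M) = x) ∧
  (∀ x y : M, addM x (addM y (oneM M)) = addM (addM x y) (oneM M)) ∧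
  (∀ x : M, mulM x (zeroM M) = zeroM M) ∧
  (∀ x y : M, mulM x (addM y (oneM M)) = addM (mulM x y) x) ∧
  (∀ x : M, ¬ ltM x (zeroM M)) ∧
  (∀ x y : M, ltM x (addM y (oneM M)) ↔ (ltM x y ∨ x = y)) ∧
  (∀ x : M, addM x (oneM M) ≠ zeroM M) ∧
  (∀ x y : M, addM x (oneM M) = addM y (oneM M) → x = y) ∧
  (∀ s : Set M, Set.Definable₁ (Set.univ : Set M) arith s →
    zeroM M ∈ s → (∀ x ∈ s, addM x (oneM M) ∈ s) → ∀ x : M, x ∈ s)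

/-- An element of `M` is standard if it is a numeral. -/
def IsStd (x : M) : Prop := ∃ n : ℕ, x = numeral M n

/-- `M` is a non-standard model of `PA`: a model of `PA` not isomorphic to the standard
model `ℕ`. -/
def NonstandardModel (M : Type*) [arith.Structure M] : Prop :=
  IsPAModel M ∧ ¬ Nonempty (M ≃[arith] ℕ)

/-- `(x)_i = 1`: the `i`-th binary digit of `x` is `1`, for standard `i`.  This is expressed
by saying that `x = u·2^(i+1) + (2^i + v)` with `v < 2^i`, where `2^i`, `2^(i+1)` are
numerals. -/
def digitB (x : M) (i : ℕ) : Prop :=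
  ∃ u v : M, x = addM (mulM u (numeral M (2 ^ (i + 1)))) (addM (numeral M (2 ^ i)) v) ∧
    ltM v (numeral M (2 ^ i))

/-- The standard system of `M`: the collection of subsets of `ℕ` coded by some
non-standard element of `M` (via its standard binary digits). -/
def SSy (M : Type*) [arith.Structure M] : Set (Set ℕ) :=
  {X | ∃ a : M, ¬ IsStd a ∧ ∀ i : ℕ, i ∈ X ↔ digitB a i}

/-- A function `M → M` is definable (with parameters) if its graph is a definable set. -/
def DefinableFun₁ (f : M → M) : Prop :=
  Set.Definable (Set.univ : Set M) arith {v : Fin 2 → M | f (v 0) = v 1}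

/-- A `k`-ary function `M^k → M` is definable (with parameters) if its graph is a
definable set. -/
def DefinableFun {k : ℕ} (F : (Fin k → M) → M) : Prop :=
  Set.Definable (Set.univ : Set M) arith
    {v : Fin (k + 1) → M | F (fun i => v i.castSucc) = v (Fin.last k)}

/-- `c` is the internal cardinality of the set `D ⊆ M`: there is an `M`-definable
bijection between `{x : x < c}` and `D`. -/
def InternalCard (D : Set M) (c : M) : Prop :=
  ∃ f : M → M, DefinableFun₁ f ∧ Set.BijOn f {x : M | ltM x c} D

/-- `y = 2^x` in the model `M`, expressed via the existence of a definable function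
satisfying the recursion of the base-`2` exponential up to `x`. -/
def IsPow2 (x y : M) : Prop :=
  ∃ f : M → M, DefinableFun₁ f ∧ f (zeroM M) = oneM M ∧
    (∀ z : M, ltM z x → f (addM z (oneM M)) = addM (f z) (f z)) ∧ f x = y

end Arith

namespace Arith

variable {N : Type*} [arith.Structure N]

/-- Formulas with constants for all elements of `N`, in free variables `x_σ` indexed by
binary sequences `σ ∈ 2^n`. -/
abbrev CFormula (N : Type*) [arith.Structure N] (n : ℕ) : Type _ :=
  (arith[[N]]).Formula (Fin n → Bool)

/-- `d^k` for standard `k`. -/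
def powStd (d : N) : ℕ → N
  | 0 => oneM N
  | k + 1 => mulM (powStd d k) d

/-- The binary sequence of length `n` coded by `j < 2^n`. -/
def binOfFin {n : ℕ} (j : Fin (2 ^ n)) : Fin n → Bool := fun i => j.val.testBit i.val

/-- The code `∑_σ b_σ · d^(rank σ)` of a tuple `(b_σ : σ ∈ 2^n)` of elements below `d`,
in base `d`. -/
def tupleCode (d : N) {n : ℕ} (b : (Fin n → Bool) → N) : N :=
  (List.finRange (2 ^ n)).foldr
    (fun j acc => addM (mulM (b (binOfFin j)) (powStd d j.val)) acc) (zeroM N)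

/-- `b` realizes all formulas in `fmls`. -/
def RealizesAll {n : ℕ} (fmls : Set (CFormula N n)) (b : (Fin n → Bool) → N) : Prop :=
  ∀ φ ∈ fmls, φ.Realize b

/-- The set of codes of tuples realizing `fmls` in `N`; this represents the internal set
`p(N)` of realizations of a condition. -/
def realizationCodes (d : N) {n : ℕ} (fmls : Set (CFormula N n)) : Set N :=
  {e | ∃ b : (Fin n → Bool) → N, RealizesAll fmls b ∧ e = tupleCode d b}

/-- A condition: a finite type `p` of `N` in the variables `(x_σ : σ ∈ 2^{n_p})`
(with parameters from `N`, and no quantifiers over any `x_σ`), such that `p ⊢ x_σ < d`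
(where `d = 2^a`), and such that for some positive rational `r = u/v`, internally in `N`,
`|p(N)| > r · d^(2^{n_p})`. -/
structure Condition (N : Type*) [arith.Structure N] (d : N) : Type _ where
  n : ℕ
  fmls : Set (CFormula N n)
  finite : fmls.Finite
  realizable : ∃ b : (Fin n → Bool) → N, RealizesAll fmls b
  bounded : ∀ b : (Fin n → Bool) → N, RealizesAll fmls b → ∀ σ : Fin n → Bool, ltM (b σ) d
  large : ∃ (u v : ℕ) (c : N), 0 < u ∧ 0 < v ∧
    InternalCard (realizationCodes d fmls) c ∧
    ltM (mulM (numeral N u) (powStd d (2 ^ n))) (mulM (numeral N v) c)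

/-- The `m`-reduct of a formula in the variables `(x_σ : σ ∈ 2^n)`: substitute
`x_{σ↾m}` for `x_σ`. -/
def reduct {n m : ℕ} (h : m ≤ n) (φ : CFormula N n) : CFormula N m :=
  φ.relabel fun σ => fun i => σ (Fin.castLE h i)

/-- The order on conditions: `q ≤ p` iff `n_q ≥ n_p` and `q` contains every
`n_q`-ramification of every formula in `p` (i.e. every formula whose `n_p`-reduct lies
in `p`). -/
def CondLE {d : N} (q p : Condition N d) : Prop :=
  ∃ h : p.n ≤ q.n, ∀ ψ : CFormula N q.n, reduct h ψ ∈ p.fmls → ψ ∈ q.fmls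

/-- Formulas in the variables `(x_f : f ∈ 2^ω)` with constants from `N`. -/
abbrev CFormulaInf (N : Type*) [arith.Structure N] : Type _ :=
  (arith[[N]]).Formula (ℕ → Bool)

/-- The `m`-reduct of a formula in the variables `(x_f : f ∈ 2^ω)`: substitute
`x_{f↾m}` for `x_f`. -/
def reductInf {m : ℕ} (φ : CFormulaInf N) : CFormula N m :=
  φ.relabel fun f => fun i => f i.val

end Arith

/-!
For `i ∈ N` write `f i` and `h i` for the internal number of realizations of `p` at which the
`i`-th digit of `F` is `0`, respectively `1`. They add up to at least the internal cardinality `c`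
of `p(N)`. If for each standard `i` the realizations whose `i`-th digit disagrees with `g i` were
fewer than `c / 2`, then `g` would consist of the standard `i` with `2 * f i < c`; a set definable
in this way is coded in `N`. So for some `i` at least half of `p(N)` disagrees with `g` at `i`, and
adding this disagreement to `p` preserves the largeness of the set of realizations. The finitely
many tuples of variables are treated one after the other.

Internal counting functions and binary digits are obtained by primitive recursion inside `N`,
through Gödel's `β`-function.
-/

namespace Arith

section Definability

/-- Definability with parameters of a predicate on assignments `α → M`; the predicate form of
`Set.Definable`, which the search in `definable` below can decompose. -/
def DefinablePred (L : Language) {M : Type*} [L.Structure M] {α : Type} (P : (α → M) → Prop) :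
    Prop :=
  (Set.univ : Set M).Definable L {v | P v}

variable {L : Language} {M : Type*} [L.Structure M] {α β : Type}

namespace DefinablePred

variable {P Q : (α → M) → Prop}

theorem congr (hP : DefinablePred L P) (h : ∀ v, Q v ↔ P v) : DefinablePred L Q := by
  rwa [show Q = P from funext fun v => propext (h v)]

theorem and (hP : DefinablePred L P) (hQ : DefinablePred L Q) :
    DefinablePred L fun v => P v ∧ Q v :=
  Set.Definable.inter hP hQ

theorem or (hP : DefinablePred L P) (hQ : DefinablePred L Q) :
    DefinablePred L fun v => P v ∨ Q v :=
  Set.Definable.union hP hQ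

theorem not (hP : DefinablePred L P) : DefinablePred L fun v => ¬ P v :=
  Set.Definable.compl hP

theorem imp (hP : DefinablePred L P) (hQ : DefinablePred L Q) :
    DefinablePred L fun v => P v → Q v :=
  (hP.not.or hQ).congr fun _ => imp_iff_not_or

theorem iff (hP : DefinablePred L P) (hQ : DefinablePred L Q) :
    DefinablePred L fun v => P v ↔ Q v :=
  ((hP.imp hQ).and (hQ.imp hP)).congr fun _ => iff_iff_implies_and_implies

theorem eq {s t : (α → M) → M} (hs : Set.univ.DefinableFun L s) (ht : Set.univ.DefinableFun L t) :
    DefinablePred L fun v => s v = t v :=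
  hs.ofPred_eq ht

theorem relabel (hP : DefinablePred L P) (f : α → β) :
    DefinablePred L fun v : β → M => P fun i => v (f i) :=
  Set.Definable.preimage_comp f hP

theorem comp [Finite β] {P : (β → M) → Prop} (hP : DefinablePred L P) {t : β → (α → M) → M}
    (ht : ∀ j, Set.univ.DefinableFun L (t j)) : DefinablePred L fun v => P fun j => t j v :=
  Set.Definable.preimage_map (F := fun v j => t j v) ht hP

theorem exists_tuple [Finite β] {P : (α → M) → (β → M) → Prop}
    (hP : DefinablePred L fun w : α ⊕ β → M => P (fun i => w (.inl i)) fun j => w (.inr j)) :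
    DefinablePred L fun v => ∃ y, P v y :=
  Set.Definable.exists_of_finite hP

theorem exists_elem {P : (α → M) → M → Prop}
    (hP : DefinablePred L fun w : Option α → M => P (fun i => w (some i)) (w none)) :
    DefinablePred L fun v => ∃ x, P v x :=
  (exists_tuple (P := fun v (y : Unit → M) => P v (y ()))
    (hP.relabel fun | none => Sum.inr () | some i => Sum.inl i)).congr fun _ =>
      ⟨fun ⟨x, hx⟩ => ⟨fun _ => x, hx⟩, fun ⟨y, hy⟩ => ⟨y (), hy⟩⟩

theorem forall_elem {P : (α → M) → M → Prop}
    (hP : DefinablePred L fun w : Option α → M => P (fun i => w (some i)) (w none)) :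
    DefinablePred L fun v => ∀ x, P v x :=
  (exists_elem (P := fun v x => ¬ P v x) hP.not).not.congr fun _ => not_exists_not.symm

end DefinablePred

theorem definableFun_iff_definablePred {t : (α → M) → M} :
    Set.univ.DefinableFun L t ↔
      DefinablePred L fun w : Option α → M => t (fun i => w (some i)) = w none :=
  Iff.rfl

-- `Set.Definable` takes its parameters in `L[[↥Set.univ]]`, conditions take theirs in `L[[M]]`.
theorem definablePred_realize (φ : (L[[M]]).Formula α) :
    DefinablePred L fun v : α → M => φ.Realize v := by
  let f : M → ↥(Set.univ : Set M) := fun m => ⟨m, trivial⟩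
  have : (LHom.constantsOnMap f).IsExpansionOn M := constantsOnMap_isExpansionOn rfl
  have : (L.lhomWithConstantsMap f).IsExpansionOn M := LHom.sumMap_isExpansionOn _ _ _
  exact ⟨(L.lhomWithConstantsMap f).onFormula φ, Set.ext fun v => (LHom.realize_onFormula _ φ).symm⟩

theorem DefinablePred.exists_formula {P : (α → M) → Prop} (hP : DefinablePred L P) :
    ∃ φ : (L[[M]]).Formula α, ∀ v, φ.Realize v ↔ P v := by
  obtain ⟨φ, hφ⟩ := hP
  let f : ↥(Set.univ : Set M) → M := fun m => m
  have : (LHom.constantsOnMap f).IsExpansionOn M := constantsOnMap_isExpansionOn rfl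
  have : (L.lhomWithConstantsMap f).IsExpansionOn M := LHom.sumMap_isExpansionOn _ _ _
  exact ⟨(L.lhomWithConstantsMap f).onFormula φ, fun v =>
    (LHom.realize_onFormula _ φ).trans (Set.ext_iff.1 hφ v).symm⟩

theorem definableFun_const (c : M) : Set.univ.DefinableFun L fun _ : α → M => c :=
  L.definableFun_const α (Set.mem_univ c)

/-- Definability with parameters of a unary predicate. -/
abbrev DefinablePred₁ (L : Language) {M : Type*} [L.Structure M] (D : M → Prop) : Prop :=
  DefinablePred L fun v : Fin 1 → M => D (v 0)

/-- Definability with parameters of a binary relation. -/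
abbrev DefinablePred₂ (L : Language) {M : Type*} [L.Structure M] (R : M → M → Prop) : Prop :=
  DefinablePred L fun v : Fin 2 → M => R (v 0) (v 1)

/-- Definability with parameters of a unary operation. -/
abbrev DefinableOp₁ (L : Language) {M : Type*} [L.Structure M] (f : M → M) : Prop :=
  Set.univ.DefinableFun L fun v : Fin 1 → M => f (v 0)

/-- Definability with parameters of a binary operation. -/
abbrev DefinableOp₂ (L : Language) {M : Type*} [L.Structure M] (f : M → M → M) : Prop :=
  Set.univ.DefinableFun L fun v : Fin 2 → M => f (v 0) (v 1)

/-- Definability with parameters of a ternary operation. -/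
abbrev DefinableOp₃ (L : Language) {M : Type*} [L.Structure M] (f : M → M → M → M) : Prop :=
  Set.univ.DefinableFun L fun v : Fin 3 → M => f (v 0) (v 1) (v 2)

section Composition

variable {s t u : (α → M) → M}

theorem DefinablePred₁.comp {D : M → Prop} (hD : DefinablePred₁ L D)
    (hs : Set.univ.DefinableFun L s) : DefinablePred L fun v => D (s v) :=
  DefinablePred.comp hD (t := ![s]) <| by simpa using hs

theorem DefinablePred₂.comp {R : M → M → Prop} (hR : DefinablePred₂ L R)
    (hs : Set.univ.DefinableFun L s) (ht : Set.univ.DefinableFun L t) :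
    DefinablePred L fun v => R (s v) (t v) :=
  DefinablePred.comp hR (t := ![s, t]) <| by simpa [Fin.forall_fin_two] using ⟨hs, ht⟩

theorem DefinableOp₁.comp {f : M → M} (hf : DefinableOp₁ L f) (hs : Set.univ.DefinableFun L s) :
    Set.univ.DefinableFun L fun v => f (s v) :=
  Set.DefinableFun.comp (g := fun v => ![s v]) (by simpa [Set.DefinableMap] using hs) hf

theorem DefinableOp₂.comp {f : M → M → M} (hf : DefinableOp₂ L f)
    (hs : Set.univ.DefinableFun L s) (ht : Set.univ.DefinableFun L t) :
    Set.univ.DefinableFun L fun v => f (s v) (t v) :=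
  Set.DefinableFun.comp (g := fun v => ![s v, t v])
    (by simpa [Set.DefinableMap, Fin.forall_fin_two] using ⟨hs, ht⟩) hf

theorem DefinableOp₃.comp {f : M → M → M → M} (hf : DefinableOp₃ L f)
    (hs : Set.univ.DefinableFun L s) (ht : Set.univ.DefinableFun L t)
    (hu : Set.univ.DefinableFun L u) : Set.univ.DefinableFun L fun v => f (s v) (t v) (u v) :=
  Set.DefinableFun.comp (g := fun v => ![s v, t v, u v])
    (by simpa [Set.DefinableMap, Fin.forall_fin_succ] using ⟨hs, ht, hu⟩) hf

theorem definablePred₂_exists_fiber [Finite α] {P : (α → M) → Prop} (hP : DefinablePred L P)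
    {C : (α → M) → M} (hC : Set.univ.DefinableFun L C) (ht : Set.univ.DefinableFun L t)
    {Q : M → M → Prop} (hQ : DefinablePred₂ L Q) :
    DefinablePred₂ L fun x y => ∃ v, (P v ∧ C v = y) ∧ Q x (t v) := by
  have relabel {u : (α → M) → M} (hu : Set.univ.DefinableFun L u) :
      Set.univ.DefinableFun L fun w : Fin 2 ⊕ α → M => u fun j => w (Sum.inr j) :=
    hu.comp (g := fun w j => w (Sum.inr j)) fun _ => .proj _
  exact .exists_tuple (P := fun w v => (P v ∧ C v = w 1) ∧ Q (w 0) (t v))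
    (((hP.relabel Sum.inr).and (.eq (relabel hC) (.proj _))).and
      (DefinablePred₂.comp hQ (.proj _) (relabel ht)))

end Composition

end Definability

section Operations

variable {M : Type*} [arith.Structure M]

theorem definableFun₁_iff_definableOp₁ {f : M → M} : DefinableFun₁ f ↔ DefinableOp₁ arith f :=
  ⟨fun h => DefinablePred.relabel (P := fun v : Fin 2 → M => f (v 0) = v 1) h ![some 0, none],
    fun h => DefinablePred.relabel (P := fun v : Option (Fin 1) → M => f (v (some 0)) = v none) h
      fun o => o.elim (1 : Fin 2) fun _ => 0⟩

theorem DefinableFun.definableFun_univ {k : ℕ} {F : (Fin k → M) → M} (hF : DefinableFun F) :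
    Set.univ.DefinableFun arith F :=
  (DefinablePred.relabel (P := fun v : Fin (k + 1) → M => F (fun i => v i.castSucc) =
    v (Fin.last k)) hF (Fin.lastCases none some)).congr fun v => by
      simp only [Fin.lastCases_castSucc, Fin.lastCases_last, Function.comp_def]

-- The hypothesis keeps these instances away from `ℕ`, which is an `arith`-structure as well.
scoped instance [Fact (IsPAModel M)] : Zero M := ⟨zeroM M⟩

scoped instance [Fact (IsPAModel M)] : One M := ⟨oneM M⟩

scoped instance [Fact (IsPAModel M)] : Add M := ⟨addM⟩

scoped instance [Fact (IsPAModel M)] : Mul M := ⟨mulM⟩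

scoped instance [Fact (IsPAModel M)] : LT M := ⟨ltM⟩

scoped instance [Fact (IsPAModel M)] : LE M := ⟨leM⟩

variable [Fact (IsPAModel M)] {α : Type} {s t : (α → M) → M}

theorem definableFun_add (hs : Set.univ.DefinableFun arith s)
    (ht : Set.univ.DefinableFun arith t) : Set.univ.DefinableFun arith fun v => s v + t v :=
  (Set.DefinableFun.fun_symbol (L := arith) arithFunc.add).of_empty.comp (g := fun v => ![s v, t v])
    (by simpa [Set.DefinableMap, Fin.forall_fin_two] using ⟨hs, ht⟩)

theorem definableFun_mul (hs : Set.univ.DefinableFun arith s)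
    (ht : Set.univ.DefinableFun arith t) : Set.univ.DefinableFun arith fun v => s v * t v :=
  (Set.DefinableFun.fun_symbol (L := arith) arithFunc.mul).of_empty.comp (g := fun v => ![s v, t v])
    (by simpa [Set.DefinableMap, Fin.forall_fin_two] using ⟨hs, ht⟩)

theorem definablePred_lt (hs : Set.univ.DefinableFun arith s)
    (ht : Set.univ.DefinableFun arith t) : DefinablePred arith fun v => s v < t v := by
  have hlt : (∅ : Set M).Definable arith {v : Fin 2 → M | v 0 < v 1} :=
    Set.empty_definable_iff.2 ⟨Relations.formula₂ (L := arith) arithRel.lt (.var 0) (.var 1),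
      Set.ext fun v => (Formula.realize_rel₂ (L := arith) (R := arithRel.lt) (t₁ := .var 0)
        (t₂ := .var 1) (v := v)).symm⟩
  exact DefinablePred₂.comp (R := fun x y : M => x < y) (hlt.mono (Set.empty_subset _)) hs ht

theorem definablePred_le (hs : Set.univ.DefinableFun arith s)
    (ht : Set.univ.DefinableFun arith t) : DefinablePred arith fun v => s v ≤ t v :=
  (definablePred_lt hs ht).or (.eq hs ht)

end Operations

-- Without argument, `definable` searches for the proof, using definability facts in the context.
theorem definable {M : Type*} [arith.Structure M] {α : Type} {P : (α → M) → Prop}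
    (hP : DefinablePred arith P := by
      repeat' first
      | with_reducible apply DefinablePred.and
      | with_reducible apply DefinablePred.or
      | with_reducible apply DefinablePred.not
      | with_reducible apply DefinablePred.iff
      | with_reducible apply DefinablePred.exists_elem
      | with_reducible apply DefinablePred.forall_elem
      | with_reducible apply DefinablePred.imp
      | with_reducible apply DefinablePred.eq
      | with_reducible apply definableFun_add
      | with_reducible apply definableFun_mul
      | with_reducible apply definablePred_lt
      | with_reducible apply definablePred_le
      | with_reducible apply Set.DefinableFun.proj
      | with_reducible apply definableFun_const
      | with_reducible apply DefinablePred₁.comp (by assumption)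
      | with_reducible apply DefinablePred₂.comp (by assumption)
      | with_reducible apply DefinableOp₁.comp (by assumption)
      | with_reducible apply DefinableOp₂.comp (by assumption)
      | with_reducible apply DefinableOp₃.comp (by assumption)) : DefinablePred arith P :=
  hP

section Semiring

variable {M : Type*} [arith.Structure M] [hM : Fact (IsPAModel M)]

@[elab_as_elim]
theorem pa_induction {motive : M → Prop} (definable : DefinablePred₁ arith motive)
    (zero : motive 0) (succ : ∀ x, motive x → motive (x + 1)) (x : M) : motive x :=
  hM.out.2.2.2.2.2.2.2.2 {x | motive x} definable zero succ x

theorem pa_add_zero (x : M) : x + 0 = x := hM.out.1 x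

theorem pa_add_succ (x y : M) : x + (y + 1) = x + y + 1 := hM.out.2.1 x y

theorem pa_mul_zero (x : M) : x * 0 = 0 := hM.out.2.2.1 x

theorem pa_mul_succ (x y : M) : x * (y + 1) = x * y + x := hM.out.2.2.2.1 x y

theorem pa_not_lt_zero (x : M) : ¬ x < 0 := hM.out.2.2.2.2.1 x

theorem pa_lt_succ_iff (x y : M) : x < y + 1 ↔ x < y ∨ x = y := hM.out.2.2.2.2.2.1 x y

theorem pa_succ_ne_zero (x : M) : x + 1 ≠ 0 := hM.out.2.2.2.2.2.2.1 x

theorem pa_succ_inj {x y : M} (e : x + 1 = y + 1) : x = y := hM.out.2.2.2.2.2.2.2.1 x y e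

theorem pa_zero_add (x : M) : 0 + x = x := by
  induction x using pa_induction with
  | definable => exact definable
  | zero => exact pa_add_zero 0
  | succ x ih => rw [pa_add_succ, ih]

theorem pa_succ_add (x y : M) : y + 1 + x = y + x + 1 := by
  induction x using pa_induction with
  | definable => exact definable
  | zero => simp only [pa_add_zero]
  | succ x ih => rw [pa_add_succ, ih, pa_add_succ]

theorem pa_add_comm (x y : M) : x + y = y + x := by
  induction y using pa_induction with
  | definable => exact definable
  | zero => rw [pa_add_zero, pa_zero_add]
  | succ y ih => rw [pa_add_succ, ih, pa_succ_add]

theorem pa_add_assoc (x y z : M) : x + y + z = x + (y + z) := by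
  induction z using pa_induction with
  | definable => exact definable
  | zero => simp only [pa_add_zero]
  | succ z ih => rw [pa_add_succ, ih, pa_add_succ, pa_add_succ]

scoped instance : AddCommMonoid M where
  add_assoc := pa_add_assoc
  zero_add := pa_zero_add
  add_zero := pa_add_zero
  add_comm := pa_add_comm
  nsmul := nsmulRec

theorem pa_zero_mul (x : M) : 0 * x = 0 := by
  induction x using pa_induction with
  | definable => exact definable
  | zero => exact pa_mul_zero 0
  | succ x ih => rw [pa_mul_succ, ih, add_zero]

theorem pa_succ_mul (x y : M) : (y + 1) * x = y * x + x := by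
  induction x using pa_induction with
  | definable => exact definable
  | zero => simp only [pa_mul_zero, add_zero]
  | succ x ih => rw [pa_mul_succ, ih, pa_mul_succ, ← add_assoc, ← add_assoc, add_right_comm (y * x)]

theorem pa_mul_comm (x y : M) : x * y = y * x := by
  induction y using pa_induction with
  | definable => exact definable
  | zero => rw [pa_mul_zero, pa_zero_mul]
  | succ y ih => rw [pa_mul_succ, ih, pa_succ_mul]

theorem pa_mul_add (x y z : M) : x * (y + z) = x * y + x * z := by
  induction z using pa_induction with
  | definable => exact definable
  | zero => simp only [pa_mul_zero, add_zero]
  | succ z ih => rw [← add_assoc, pa_mul_succ, ih, pa_mul_succ, add_assoc]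

theorem pa_mul_assoc (x y z : M) : x * y * z = x * (y * z) := by
  induction z using pa_induction with
  | definable => exact definable
  | zero => simp only [pa_mul_zero]
  | succ z ih => rw [pa_mul_succ, ih, pa_mul_succ, pa_mul_add]

theorem pa_mul_one (x : M) : x * 1 = x := by
  rw [← zero_add 1, pa_mul_succ, pa_mul_zero, zero_add]

scoped instance : CommSemiring M where
  left_distrib := pa_mul_add
  right_distrib x y z := by simp only [pa_mul_comm _ z, pa_mul_add]
  zero_mul := pa_zero_mul
  mul_zero := pa_mul_zero
  mul_assoc := pa_mul_assoc
  one_mul x := (pa_mul_comm 1 x).trans (pa_mul_one x)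
  mul_one := pa_mul_one
  mul_comm := pa_mul_comm
  natCast := Nat.unaryCast
  npow := npowRec

scoped instance : IsRightCancelAdd M where
  add_right_cancel z x y e := by
    induction z using pa_induction with
    | definable => exact definable
    | zero => simpa only [add_zero] using e
    | succ z ih => exact ih (pa_succ_inj (by simpa only [add_assoc] using e))

scoped instance : IsCancelAdd M := AddCommMagma.IsRightCancelAdd.toIsCancelAdd M

theorem eq_zero_or_exists_succ (x : M) : x = 0 ∨ ∃ y, x = y + 1 := by
  induction x using pa_induction with
  | definable => exact definable
  | zero => exact Or.inl rfl
  | succ x _ => exact Or.inr ⟨x, rfl⟩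

theorem eq_zero_of_add_eq_zero {x y : M} (e : x + y = 0) : x = 0 := by
  obtain rfl | ⟨z, rfl⟩ := eq_zero_or_exists_succ y
  · simpa only [add_zero] using e
  · exact (pa_succ_ne_zero (x + z) (by rwa [add_assoc])).elim

theorem lt_iff_exists_add_succ {x y : M} : x < y ↔ ∃ z, y = x + (z + 1) := by
  induction y using pa_induction with
  | definable => exact definable
  | zero =>
    refine iff_of_false (pa_not_lt_zero x) ?_
    rintro ⟨z, hz⟩
    exact pa_succ_ne_zero (x + z) (by rw [add_assoc, ← hz])
  | succ y ih =>
    simp only [pa_lt_succ_iff, ih, ← add_assoc, add_left_inj]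
    constructor
    · rintro (⟨z, rfl⟩ | rfl)
      · exact ⟨z + 1, add_assoc _ _ _⟩
      · exact ⟨0, (add_zero _).symm⟩
    · rintro ⟨z, rfl⟩
      obtain rfl | ⟨z, rfl⟩ := eq_zero_or_exists_succ z
      · exact Or.inr (add_zero _).symm
      · exact Or.inl ⟨z, (add_assoc _ _ _).symm⟩

theorem pa_le_iff_exists_add {x y : M} : x ≤ y ↔ ∃ z, y = x + z := by
  change x < y ∨ x = y ↔ _
  rw [lt_iff_exists_add_succ]
  constructor
  · rintro (⟨z, hz⟩ | rfl)
    · exact ⟨z + 1, hz⟩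
    · exact ⟨0, (add_zero x).symm⟩
  · rintro ⟨z, rfl⟩
    obtain rfl | ⟨z, rfl⟩ := eq_zero_or_exists_succ z
    · exact Or.inr (add_zero x).symm
    · exact Or.inl ⟨z, rfl⟩

theorem pa_le_total (x y : M) : x ≤ y ∨ y ≤ x := by
  simp only [pa_le_iff_exists_add]
  induction y using pa_induction with
  | definable => exact definable
  | zero => exact Or.inr ⟨x, (zero_add x).symm⟩
  | succ y ih =>
    rcases ih with ⟨z, rfl⟩ | ⟨z, rfl⟩
    · exact Or.inl ⟨z + 1, add_assoc x z 1⟩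
    · obtain rfl | ⟨w, rfl⟩ := eq_zero_or_exists_succ z
      · exact Or.inl ⟨1, by rw [add_zero]⟩
      · exact Or.inr ⟨w, by ring⟩

noncomputable scoped instance : LinearOrder M where
  le_refl x := Or.inr rfl
  le_trans x y z hxy hyz := by
    obtain ⟨u, rfl⟩ := pa_le_iff_exists_add.1 hxy
    obtain ⟨w, rfl⟩ := pa_le_iff_exists_add.1 hyz
    exact pa_le_iff_exists_add.2 ⟨u + w, add_assoc x u w⟩
  le_antisymm x y hxy hyx := by
    obtain ⟨u, rfl⟩ := pa_le_iff_exists_add.1 hxy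
    obtain ⟨w, hw⟩ := pa_le_iff_exists_add.1 hyx
    rw [add_assoc, left_eq_add] at hw
    rw [eq_zero_of_add_eq_zero hw, add_zero]
  le_total := pa_le_total
  lt_iff_le_not_ge x y := by
    rw [lt_iff_exists_add_succ]
    constructor
    · rintro ⟨u, rfl⟩
      refine ⟨pa_le_iff_exists_add.2 ⟨u + 1, rfl⟩, fun h => ?_⟩
      obtain ⟨w, hw⟩ := pa_le_iff_exists_add.1 h
      rw [add_assoc, left_eq_add] at hw
      exact pa_succ_ne_zero u (eq_zero_of_add_eq_zero hw)
    · rintro ⟨hxy, hyx⟩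
      exact lt_iff_exists_add_succ.1 (hxy.resolve_right fun e => hyx (Or.inr e.symm))
  toDecidableLE := Classical.decRel _

scoped instance : CanonicallyOrderedAdd M where
  exists_add_of_le := pa_le_iff_exists_add.1
  le_add_self x y := pa_le_iff_exists_add.2 ⟨y, add_comm y x⟩
  le_self_add _ y := pa_le_iff_exists_add.2 ⟨y, rfl⟩

scoped instance : IsOrderedAddMonoid M where
  add_le_add_left x y hxy z := by
    obtain ⟨u, rfl⟩ := exists_add_of_le hxy
    exact le_iff_exists_add.2 ⟨u, add_right_comm x u z⟩

theorem pa_mul_lt_mul_of_pos_left {x y z : M} (hx : 0 < x) (hyz : y < z) : x * y < x * z := by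
  obtain ⟨u, rfl⟩ := lt_iff_exists_add_succ.1 hx
  obtain ⟨w, rfl⟩ := lt_iff_exists_add_succ.1 hyz
  exact lt_iff_exists_add_succ.2 ⟨u * w + w + u, by ring⟩

scoped instance : IsStrictOrderedRing M where
  le_of_add_le_add_left x y z e := le_of_add_le_add_left e
  zero_le_one := zero_le
  exists_pair_ne := ⟨0 + 1, 0, pa_succ_ne_zero 0⟩
  mul_lt_mul_of_pos_left x hx y z := pa_mul_lt_mul_of_pos_left hx
  mul_lt_mul_of_pos_right x hx y z h := by
    simpa only [mul_comm] using pa_mul_lt_mul_of_pos_left hx h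

theorem lt_succ_iff {x y : M} : x < y + 1 ↔ x ≤ y := pa_lt_succ_iff x y

theorem succ_le_iff {x y : M} : x + 1 ≤ y ↔ x < y := by
  rw [← lt_succ_iff, add_lt_add_iff_right]

end Semiring

section Coding

variable {M : Type*} [arith.Structure M] [Fact (IsPAModel M)]

theorem definablePred₂_dvd : DefinablePred₂ arith fun x y : M => x ∣ y :=
  DefinablePred.congr (Q := fun v => v 0 ∣ v 1) (P := fun v => ∃ z, v 1 = v 0 * z) definable
    fun _ => Iff.rfl

theorem exists_common_multiple (n : M) : ∃ m : M, 0 < m ∧ ∀ i, 0 < i → i ≤ n → i ∣ m := by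
  have := definablePred₂_dvd (M := M)
  induction n using pa_induction with
  | definable => exact definable
  | zero => exact ⟨1, zero_lt_one, fun i hi h => (hi.not_ge h).elim⟩
  | succ n ih =>
    obtain ⟨m, hm, hdvd⟩ := ih
    refine ⟨m * (n + 1), mul_pos hm (lt_succ_iff.2 zero_le), fun i hi hin => ?_⟩
    rcases hin.lt_or_eq with hin | rfl
    · exact (hdvd i hi (lt_succ_iff.1 hin)).mul_right _
    · exact dvd_mul_left _ _

/-- `u` is invertible modulo `A`; without subtraction, this is the usable form of coprimality. -/
def InvMod (u A : M) : Prop := ∃ x y, u * x = A * y + 1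

namespace InvMod

variable {u v A : M}

theorem one_left (A : M) : InvMod 1 A := ⟨1, 0, by ring⟩

theorem mul (hu : InvMod u A) (hv : InvMod v A) : InvMod (u * v) A := by
  obtain ⟨x, y, h⟩ := hu
  obtain ⟨x', y', h'⟩ := hv
  refine ⟨x * x', A * y * y' + y + y', ?_⟩
  calc u * v * (x * x') = (u * x) * (v * x') := by ring
    _ = A * (A * y * y' + y + y') + 1 := by rw [h, h']; ring

theorem symm (hA : 0 < A) (h : InvMod u A) : InvMod A u := by
  obtain ⟨x, y, h⟩ := h
  obtain hz | ⟨z, hz⟩ := eq_zero_or_exists_succ (A * y)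
  · obtain ⟨b, rfl⟩ := lt_iff_exists_add_succ.1 hA
    rw [hz, zero_add] at h
    exact ⟨1, x * b, by rw [← mul_assoc, h]; ring⟩
  · refine ⟨y * (A * y), z * x, ?_⟩
    calc A * (y * (A * y)) = (A * y) * (A * y) := by ring
      _ = z * (A * y + 1) + 1 := by rw [hz]; ring
      _ = u * (z * x) + 1 := by rw [← h]; ring

theorem not_dvd (hA : 1 < A) (h : InvMod u A) : ¬ A ∣ u := by
  rintro ⟨t, rfl⟩
  obtain ⟨x, y, h⟩ := h
  rw [mul_assoc] at h
  rcases le_or_gt (t * x) y with hy | hy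
  · have hle : A * y + 1 ≤ A * y := h ▸ mul_le_mul_right hy A
    exact hle.not_gt (lt_succ_iff.2 le_rfl)
  · have hle : A * y + A ≤ A * y + 1 := by
      simpa only [h, mul_add, mul_one] using mul_le_mul_right (succ_le_iff.2 hy) A
    exact (add_le_add_iff_left (A * y)).1 hle |>.not_gt hA

end InvMod

/-- Gödel's moduli: if `m` is a common multiple of the positive `i ≤ n`, then the
`modulus m y` with `y < n` are pairwise coprime. -/
abbrev modulus (m y : M) : M := m * (y + 1) + 1

theorem one_lt_modulus {m : M} (hm : 0 < m) (y : M) : 1 < modulus m y :=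
  lt_add_of_pos_left 1 (mul_pos hm (lt_succ_iff.2 zero_le))

theorem invMod_modulus_add {m i δ : M} (hm : 0 < m) (hδ : δ ∣ m) :
    InvMod (modulus m (i + δ)) (modulus m i) := by
  obtain ⟨e, he⟩ := hδ
  obtain ⟨q, hq⟩ := (eq_zero_or_exists_succ (m * (i + 1))).resolve_left
    (mul_pos hm (lt_succ_iff.2 zero_le)).ne'
  refine ⟨e * (i + 1) * (i + 1), e * (i + 1) * (i + 1) + q, ?_⟩
  calc modulus m (i + δ) * (e * (i + 1) * (i + 1))
      = modulus m i * (e * (i + 1) * (i + 1)) + m * (i + 1) * ((δ * e) * (i + 1)) := by ring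
    _ = modulus m i * (e * (i + 1) * (i + 1) + q) + 1 := by rw [← he, modulus, hq]; ring

theorem invMod_modulus {m n i j : M} (hm : 0 < m) (hdvd : ∀ i, 0 < i → i ≤ n → i ∣ m)
    (hi : i < n) (hj : j < n) (hij : i ≠ j) : InvMod (modulus m j) (modulus m i) := by
  have of_lt {i j : M} (hj : j < n) (hij : i < j) : InvMod (modulus m j) (modulus m i) := by
    obtain ⟨δ, rfl⟩ := lt_iff_exists_add_succ.1 hij
    exact invMod_modulus_add hm
      (hdvd (δ + 1) (lt_succ_iff.2 zero_le) (le_add_self.trans hj.le))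
  rcases hij.lt_or_gt with hij | hij
  · exact of_lt hj hij
  · exact (of_lt hi hij).symm (zero_lt_one.trans (one_lt_modulus hm j))

theorem exists_dvd_iff_of_invMod {D : M → Prop} (hD : DefinablePred₁ arith D) {m n : M}
    (hm : ∀ i < n, ∀ j < n, i ≠ j → InvMod (modulus m j) (modulus m i)) :
    ∃ w, ∀ y < n, (D y → modulus m y ∣ w) ∧ (¬ D y → InvMod w (modulus m y)) := by
  have := definablePred₂_dvd (M := M)
  have : DefinablePred₂ arith (InvMod (M := M)) := by unfold InvMod; exact definable
  suffices ∀ k, ∃ w, ∀ y < n, (D y ∧ y < k → modulus m y ∣ w) ∧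
      (¬ (D y ∧ y < k) → InvMod w (modulus m y)) by
    obtain ⟨w, hw⟩ := this n
    exact ⟨w, fun y hy => by simpa only [hy, and_true] using hw y hy⟩
  intro k
  induction k using pa_induction with
  | definable => exact definable
  | zero => exact ⟨1, fun y _ => ⟨fun h => (not_lt_zero h.2).elim, fun _ => .one_left _⟩⟩
  | succ k ih =>
    obtain ⟨w, hw⟩ := ih
    by_cases hk : k < n ∧ D k
    · refine ⟨w * modulus m k, fun y hy => ?_⟩
      rcases eq_or_ne y k with rfl | hyk
      · exact ⟨fun _ => dvd_mul_left _ _, fun h => (h ⟨hk.2, lt_succ_iff.2 le_rfl⟩).elim⟩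
      · rw [lt_succ_iff, hyk.le_iff_lt]
        exact ⟨fun h => ((hw y hy).1 h).mul_right _,
          fun h => ((hw y hy).2 h).mul (hm y hy k hk.1 hyk)⟩
    · refine ⟨w, fun y hy => ?_⟩
      have : D y ∧ y < k + 1 ↔ D y ∧ y < k := and_congr_right fun hDy => by
        rw [lt_succ_iff]
        exact Ne.le_iff_lt fun e => hk ⟨e ▸ hy, e ▸ hDy⟩
      rw [this]
      exact hw y hy

/-- `y` belongs to the finite set coded by `m` and `w`. -/
abbrev MemCode (m w y : M) : Prop := modulus m y ∣ w

theorem exists_memCode_iff {D : M → Prop} (hD : DefinablePred₁ arith D) (n : M) :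
    ∃ m w, ∀ y < n, (MemCode m w y ↔ D y) := by
  obtain ⟨m, hm, hdvd⟩ := exists_common_multiple n
  obtain ⟨w, hw⟩ := exists_dvd_iff_of_invMod hD (m := m)
    fun i hi j hj hij => invMod_modulus hm hdvd hi hj hij
  exact ⟨m, w, fun y hy => ⟨fun h => by_contra fun hDy =>
    ((hw y hy).2 hDy).not_dvd (one_lt_modulus hm y) h, (hw y hy).1⟩⟩

/-- A pairing function, definable by a term. -/
abbrev pair (x y : M) : M := (x + y) * (x + y) + y

theorem pair_lt_pair_of_add_lt_add {x y x' y' : M} (h : x + y < x' + y') :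
    pair x y < pair x' y' := by
  obtain ⟨z, hz⟩ := lt_iff_exists_add_succ.1 h
  rw [pair, pair, hz, lt_iff_exists_add_succ]
  exact ⟨(x + y) * (z + z + 1) + x + z * z + z + z + y', by ring⟩

theorem pair_inj {x y x' y' : M} (h : pair x y = pair x' y') : x = x' ∧ y = y' := by
  have hs : x + y = x' + y' := by
    rcases lt_trichotomy (x + y) (x' + y') with hlt | heq | hgt
    · exact absurd h (pair_lt_pair_of_add_lt_add hlt).ne
    · exact heq
    · exact absurd h (pair_lt_pair_of_add_lt_add hgt).ne'
  rw [pair, pair, hs, add_right_inj] at h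
  subst h
  exact ⟨add_right_cancel hs, rfl⟩

open Classical in
/-- Gödel's `β`-function, reading the `x`-th term of the sequence coded by `m` and `w`: the least
`y` such that `pair x y` belongs to the coded set, and `0` if there is none. -/
noncomputable def beta (m w x : M) : M :=
  if h : ∃ y, IsLeast {y | MemCode m w (pair x y)} y then h.choose else 0

theorem beta_eq_of_isLeast {m w x y : M} (h : IsLeast {y | MemCode m w (pair x y)} y) :
    beta m w x = y := by
  have hex : ∃ y, IsLeast {y | MemCode m w (pair x y)} y := ⟨y, h⟩
  rw [beta, dif_pos hex]
  exact hex.choose_spec.unique h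

theorem beta_eq_iff {m w x y : M} :
    beta m w x = y ↔ IsLeast {y | MemCode m w (pair x y)} y ∨
      (¬ ∃ y, IsLeast {y | MemCode m w (pair x y)} y) ∧ y = 0 := by
  by_cases h : ∃ y, IsLeast {y | MemCode m w (pair x y)} y
  · obtain ⟨z, hz⟩ := h
    rw [beta_eq_of_isLeast hz]
    refine ⟨fun e => Or.inl (e ▸ hz), ?_⟩
    rintro (hy | ⟨hne, -⟩)
    · exact hz.unique hy
    · exact (hne ⟨z, hz⟩).elim
  · rw [beta, dif_neg h, eq_comm]
    exact ⟨fun e => Or.inr ⟨h, e⟩, fun hy => hy.elim (fun hy => (h ⟨y, hy⟩).elim) And.right⟩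

theorem definableOp₃_beta : DefinableOp₃ arith (beta (M := M)) := by
  have := definablePred₂_dvd (M := M)
  refine definableFun_iff_definablePred.2 (DefinablePred.congr ?_ fun w => beta_eq_iff)
  simp only [IsLeast, lowerBounds, Set.mem_ofPred_eq]
  exact definable

theorem exists_forall_lt_le {f : M → M} (hf : DefinableOp₁ arith f) (n : M) :
    ∃ b, ∀ x < n, f x ≤ b := by
  induction n using pa_induction with
  | definable => exact definable
  | zero => exact ⟨0, fun x hx => (not_lt_zero hx).elim⟩
  | succ n ih =>
    obtain ⟨b, hb⟩ := ih
    refine ⟨max b (f n), fun x hx => ?_⟩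
    rcases (lt_succ_iff.1 hx).lt_or_eq with hx | rfl
    · exact (hb x hx).trans (le_max_left _ _)
    · exact le_max_right _ _

theorem exists_beta_eq {f : M → M} (hf : DefinableOp₁ arith f) (n : M) :
    ∃ m w, ∀ x < n, beta m w x = f x := by
  obtain ⟨b, hb⟩ := exists_forall_lt_le (f := fun x => pair x (f x))
    (definableFun_iff_definablePred.2 definable) n
  obtain ⟨m, w, hw⟩ := exists_memCode_iff (D := fun z => ∃ x, z = pair x (f x)) definable (b + 1)
  refine ⟨m, w, fun x hx => beta_eq_of_isLeast ⟨?_, fun y hy => ?_⟩⟩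
  · exact (hw _ (lt_succ_iff.2 (hb x hx))).2 ⟨x, rfl⟩
  · by_contra hlt
    rw [not_le] at hlt
    have hlt' : pair x y < b + 1 := lt_succ_iff.2 <|
      (pair_lt_pair_of_add_lt_add (by gcongr)).le.trans (hb x hx)
    obtain ⟨x', e⟩ := (hw _ hlt').1 hy
    obtain ⟨rfl, rfl⟩ := pair_inj e
    exact hlt.false

end Coding

section Recursion

variable {M : Type*} [arith.Structure M] [Fact (IsPAModel M)] {z : M → M} {s : M → M → M → M}

/-- The sequence coded by `m` and `w` satisfies, up to index `x`, the primitive recursion with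
initial value `z p` and step function `s p`. -/
def IsTrace (z : M → M) (s : M → M → M → M) (p x m w : M) : Prop :=
  beta m w 0 = z p ∧ ∀ y < x, beta m w (y + 1) = s p y (beta m w y)

theorem IsTrace.beta_eq {p x x' m w m' w' y : M} (h : IsTrace z s p x m w)
    (h' : IsTrace z s p x' m' w') (hy : y ≤ x) (hy' : y ≤ x') :
    beta m w y = beta m' w' y := by
  have := definableOp₃_beta (M := M)
  induction y using pa_induction with
  | definable => exact definable
  | zero => rw [h.1, h'.1]
  | succ y ih =>
    rw [succ_le_iff] at hy hy'
    rw [h.2 y hy, h'.2 y hy', ih hy.le hy'.le]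

theorem exists_isTrace (z : M → M) (hs : DefinableOp₃ arith s) (p x : M) :
    ∃ m w, IsTrace z s p x m w := by
  have := definableOp₃_beta (M := M)
  induction x using pa_induction with
  | definable => unfold IsTrace; exact definable
  | zero =>
    obtain ⟨m, w, h⟩ := exists_beta_eq (f := fun _ => z p) (definableFun_const _) 1
    exact ⟨m, w, h 0 zero_lt_one, fun y hy => (not_lt_zero hy).elim⟩
  | succ x ih =>
    classical
    obtain ⟨m, w, h0, hsucc⟩ := ih
    let f (y : M) : M := if y ≤ x then beta m w y else s p x (beta m w x)
    have f_of_le {y : M} (hy : y ≤ x) : f y = beta m w y := if_pos hy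
    have hf : DefinableOp₁ arith f := .ite (definablePred_le (.proj _) (definableFun_const x))
      (definableOp₃_beta.comp (definableFun_const m) (definableFun_const w) (.proj _))
      (definableFun_const _)
    obtain ⟨m', w', h'⟩ := exists_beta_eq hf (x + 1 + 1)
    have beta_of_le {y : M} (hy : y ≤ x) : beta m' w' y = beta m w y :=
      (h' y (lt_succ_iff.2 (hy.trans le_self_add))).trans (f_of_le hy)
    refine ⟨m', w', (beta_of_le zero_le).trans h0, fun y hy => ?_⟩
    rw [beta_of_le (lt_succ_iff.1 hy)]
    rcases (lt_succ_iff.1 hy).lt_or_eq with hy | rfl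
    · rw [beta_of_le (succ_le_iff.2 hy), hsucc y hy]
    · rw [h' _ (lt_succ_iff.2 le_rfl)]
      exact if_neg (lt_succ_iff.2 le_rfl).not_ge

theorem exists_definable_rec (hz : DefinableOp₁ arith z) (hs : DefinableOp₃ arith s) :
    ∃ f, DefinableOp₂ arith f ∧ ∀ p, f p 0 = z p ∧ ∀ x, f p (x + 1) = s p x (f p x) := by
  have := definableOp₃_beta (M := M)
  choose m w hmw using exists_isTrace z hs
  refine ⟨fun p x => beta (m p x) (w p x) x, ?_, fun p => ⟨(hmw p 0).1, fun x => ?_⟩⟩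
  · refine definableFun_iff_definablePred.2 (DefinablePred.congr (P := fun v => ∃ m w,
      IsTrace z s (v (some 0)) (v (some 1)) m w ∧ beta m w (v (some 1)) = v none) ?_ fun v => ?_)
    · unfold IsTrace
      exact definable
    · refine ⟨fun e => ⟨_, _, hmw _ _, e⟩, ?_⟩
      rintro ⟨m', w', h', e⟩
      exact ((hmw _ _).beta_eq h' le_rfl le_rfl).trans e
  · beta_reduce
    rw [(hmw p (x + 1)).2 x (lt_succ_iff.2 le_rfl),
      (hmw p (x + 1)).beta_eq (hmw p x) le_self_add le_rfl]

end Recursion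

section Counting

variable {M : Type*} [arith.Structure M] [Fact (IsPAModel M)]

/-- `f x` is the number of elements of `D` below `x`, for every `x`. -/
structure IsCounting (D : M → Prop) (f : M → M) : Prop where
  zero : f 0 = 0
  succ_of_mem : ∀ {x}, D x → f (x + 1) = f x + 1
  succ_of_notMem : ∀ {x}, ¬ D x → f (x + 1) = f x

theorem exists_isCounting {D : M → M → Prop} (hD : DefinablePred₂ arith D) :
    ∃ f, DefinableOp₂ arith f ∧ ∀ p, IsCounting (D p) (f p) := by
  classical
  let step (p x e : M) : M := if D p x then e + 1 else e
  have hstep : DefinableOp₃ arith step :=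
    .ite (hD.comp (.proj _) (.proj _)) (definableFun_add (.proj _) (definableFun_const 1)) (.proj _)
  obtain ⟨f, hf, hrec⟩ := exists_definable_rec (z := fun _ => 0) (definableFun_const _) hstep
  exact ⟨f, hf, fun p => ⟨(hrec p).1, fun hx => ((hrec p).2 _).trans (if_pos hx),
    fun hx => ((hrec p).2 _).trans (if_neg hx)⟩⟩

namespace IsCounting

variable {D E : M → Prop} {f h : M → M} {x y : M}

theorem le_succ (hf : IsCounting D f) (x : M) : f x ≤ f (x + 1) := by
  by_cases hx : D x
  · exact (hf.succ_of_mem hx).symm ▸ le_self_add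
  · exact (hf.succ_of_notMem hx).ge

theorem monotone (hf : IsCounting D f) (hdef : DefinableOp₁ arith f) : Monotone f := by
  intro x y hxy
  obtain ⟨z, rfl⟩ := exists_add_of_le hxy
  induction z using pa_induction with
  | definable => exact definable
  | zero => rw [add_zero]
  | succ z ih => exact (ih le_self_add).trans ((add_assoc x z 1) ▸ hf.le_succ _)

theorem lt_of_mem (hf : IsCounting D f) (hdef : DefinableOp₁ arith f) (hx : D x) (hxy : x < y) :
    f x < f y := by
  have hle := hf.monotone hdef (succ_le_iff.2 hxy)
  rwa [hf.succ_of_mem hx, succ_le_iff] at hle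

theorem injOn (hf : IsCounting D f) (hdef : DefinableOp₁ arith f) : Set.InjOn f {x | D x} := by
  intro x hx y hy heq
  rcases lt_trichotomy x y with hlt | rfl | hlt
  · exact absurd heq (hf.lt_of_mem hdef hx hlt).ne
  · rfl
  · exact absurd heq (hf.lt_of_mem hdef hy hlt).ne'

theorem exists_eq_of_lt (hf : IsCounting D f) (hdef : DefinableOp₁ arith f)
    (hD : DefinablePred₁ arith D) {j : M} (hj : j < f x) : ∃ y < x, D y ∧ f y = j := by
  induction x using pa_induction with
  | definable => exact definable
  | zero => exact (not_lt_zero (hf.zero ▸ hj)).elim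
  | succ x ih =>
    have of_lt (hj : j < f x) : ∃ y < x + 1, D y ∧ f y = j :=
      (ih hj).imp fun y hy => ⟨lt_succ_iff.2 hy.1.le, hy.2⟩
    by_cases hx : D x
    · rw [hf.succ_of_mem hx, lt_succ_iff] at hj
      rcases hj.lt_or_eq with hj | rfl
      · exact of_lt hj
      · exact ⟨x, lt_succ_iff.2 le_rfl, hx, rfl⟩
    · exact of_lt (hf.succ_of_notMem hx ▸ hj)

theorem le_add (hf : IsCounting D f) (hh : IsCounting E h) (hfdef : DefinableOp₁ arith f)
    (hhdef : DefinableOp₁ arith h) {c : M} (hcover : ∀ y < c, D y ∨ E y) (hx : x ≤ c) :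
    x ≤ f x + h x := by
  induction x using pa_induction with
  | definable => exact definable
  | zero => exact zero_le
  | succ x ih =>
    have ih := ih (le_self_add.trans hx)
    rcases hcover x (succ_le_iff.1 hx) with hx | hx
    · calc x + 1 ≤ f x + h x + 1 := by gcongr
        _ = f x + 1 + h x := by ring
        _ ≤ f (x + 1) + h (x + 1) := by rw [hf.succ_of_mem hx]; gcongr; exact hh.le_succ x
    · calc x + 1 ≤ f x + h x + 1 := by gcongr
        _ = f x + (h x + 1) := by ring
        _ ≤ f (x + 1) + h (x + 1) := by rw [hh.succ_of_mem hx]; gcongr; exact hf.le_succ x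

end IsCounting

theorem exists_definableOp₁_of_existsUnique {R : M → M → Prop} (hR : DefinablePred₂ arith R)
    {k : M} (hex : ∀ x < k, ∃! y, R x y) :
    ∃ f, DefinableOp₁ arith f ∧ ∀ x < k, R x (f x) := by
  classical
  let f (x : M) : M := if hx : x < k then (hex x hx).choose else 0
  have hf {x} (hx : x < k) : R x (f x) := by
    simp only [f, dif_pos hx]
    exact (hex x hx).choose_spec.1
  refine ⟨f, definableFun_iff_definablePred.2 (DefinablePred.congr (P := fun v =>
    (v (some 0) < k ∧ R (v (some 0)) (v none)) ∨ (¬ v (some 0) < k ∧ v none = 0))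
    definable fun v => ?_), fun x => hf⟩
  by_cases hx : v (some 0) < k
  · simp only [hx, true_and, not_true_eq_false, false_and, or_false]
    exact ⟨fun e => e ▸ hf hx, fun hR => (hex _ hx).unique (hf hx) hR⟩
  · simp only [f, hx, dif_neg, false_and, not_false_eq_true, true_and, false_or, eq_comm]

theorem internalCard_setOf_and {D : M → Prop} (hD : DefinablePred₁ arith D) {f h : M → M} {c : M}
    {E : Set M} (hf : DefinableOp₁ arith f) (hfE : Set.BijOn f {x | x < c} E)
    (hh : DefinableOp₁ arith h) (hcount : IsCounting (fun x => D (f x)) h) :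
    InternalCard {y ∈ E | D y} (h c) := by
  have hDf : DefinablePred₁ arith fun x => D (f x) := hD.comp hf
  obtain ⟨e, he, henum⟩ := exists_definableOp₁_of_existsUnique
    (R := fun j x => x < c ∧ D (f x) ∧ h x = j) definable (k := h c) fun j hj => by
      obtain ⟨x, hx⟩ := hcount.exists_eq_of_lt hh hDf hj
      exact ⟨x, hx, fun y hy => hcount.injOn hh hy.2.1 hx.2.1 (hy.2.2.trans hx.2.2.symm)⟩
  refine ⟨fun j => f (e j), definableFun₁_iff_definableOp₁.2 (hf.comp he),
    fun j hj => ⟨hfE.mapsTo (henum j hj).1, (henum j hj).2.1⟩, fun j hj j' hj' heq => ?_, ?_⟩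
  · have hee : e j = e j' := hfE.injOn (henum j hj).1 (henum j' hj').1 heq
    rw [← (henum j hj).2.2, hee, (henum j' hj').2.2]
  · rintro _ ⟨hy, hDy⟩
    obtain ⟨x, hx, rfl⟩ := hfE.surjOn hy
    have hlt : h x < h c := hcount.lt_of_mem hh hDy hx
    obtain ⟨-, hDe, heq⟩ := henum (h x) hlt
    exact ⟨h x, hlt, congrArg f (hcount.injOn hh hDe hDy heq)⟩

end Counting

section Bits

variable {M : Type*} [arith.Structure M] [Fact (IsPAModel M)]

theorem exists_pow2 : ∃ f : M → M, DefinableOp₁ arith f ∧ f 0 = 1 ∧ ∀ x, f (x + 1) = 2 * f x := by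
  obtain ⟨f, hf, hrec⟩ := exists_definable_rec (z := fun _ : M => 1) (s := fun _ _ e => 2 * e)
    (definableFun_const _) (definableFun_mul (definableFun_const _) (.proj _))
  exact ⟨f 0, hf.comp (definableFun_const 0) (.proj _), hrec 0⟩

/-- The exponential with base two of a model of arithmetic. -/
noncomputable def pow2 : M → M := exists_pow2.choose

theorem definableOp₁_pow2 : DefinableOp₁ arith (pow2 (M := M)) := exists_pow2.choose_spec.1

theorem pow2_zero : pow2 (0 : M) = 1 := exists_pow2.choose_spec.2.1

theorem pow2_succ (x : M) : pow2 (x + 1) = 2 * pow2 x := exists_pow2.choose_spec.2.2 x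

theorem pow2_natCast (n : ℕ) : pow2 (n : M) = ((2 ^ n : ℕ) : M) := by
  induction n with
  | zero => rw [Nat.cast_zero, pow2_zero, pow_zero, Nat.cast_one]
  | succ n ih => rw [Nat.cast_succ, pow2_succ, ih, pow_succ']; push_cast; rfl

theorem lt_pow2 (x : M) : x < pow2 x := by
  have := definableOp₁_pow2 (M := M)
  induction x using pa_induction with
  | definable => exact definable
  | zero => rw [pow2_zero]; exact zero_lt_one
  | succ x ih =>
    calc x + 1 < pow2 x + 1 := by gcongr
      _ ≤ pow2 x + pow2 x := by
        gcongr
        simpa only [zero_add] using succ_le_iff.2 (zero_le.trans_lt ih)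
      _ = pow2 (x + 1) := by rw [pow2_succ, two_mul]

theorem pow2_dvd_pow2 {x y : M} (h : x ≤ y) : pow2 x ∣ pow2 y := by
  obtain ⟨z, rfl⟩ := exists_add_of_le h
  have := definableOp₁_pow2 (M := M)
  have := definablePred₂_dvd (M := M)
  induction z using pa_induction with
  | definable => exact definable
  | zero => rw [add_zero]
  | succ z ih => rw [← add_assoc, pow2_succ]; exact (ih le_self_add).mul_left 2

/-- For `p` a power of two, the digit of `p` in the binary expansion of `y` is `1`. -/
def HasBit (p y : M) : Prop := ∃ u w, y = u * (2 * p) + (p + w) ∧ w < p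

theorem definablePred₂_hasBit : DefinablePred₂ arith (HasBit (M := M)) := by
  unfold HasBit; exact definable

theorem not_hasBit_of_lt {p y : M} (h : y < p) : ¬ HasBit p y := by
  rintro ⟨u, w, rfl, -⟩
  exact h.not_ge (le_self_add.trans le_add_self)

theorem hasBit_add_of_lt {p y : M} (h : y < p) : HasBit p (p + y) :=
  ⟨0, y, by rw [zero_mul, zero_add], h⟩

theorem hasBit_add_iff_of_dvd {p z y : M} (h : 2 * p ∣ z) : HasBit p (z + y) ↔ HasBit p y := by
  obtain ⟨t, rfl⟩ := h
  constructor
  · rintro ⟨u, w, e, hw⟩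
    rcases lt_or_ge u t with hut | htu
    · have hlt : u * (2 * p) + (p + w) < 2 * p * t :=
        calc u * (2 * p) + (p + w) < u * (2 * p) + (p + p) := by gcongr
          _ = 2 * p * (u + 1) := by ring
          _ ≤ 2 * p * t := by gcongr; exact succ_le_iff.2 hut
      exact absurd e (hlt.trans_le le_self_add).ne'
    · obtain ⟨s, rfl⟩ := exists_add_of_le htu
      exact ⟨s, w, add_left_cancel (a := 2 * p * t) (by rw [e]; ring), hw⟩
  · rintro ⟨u, w, rfl, hw⟩
    exact ⟨t + u, w, by ring, hw⟩

theorem hasBit_pow2_add_of_lt {i n : M} (h : i < n) (y : M) :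
    HasBit (pow2 i) (pow2 n + y) ↔ HasBit (pow2 i) y :=
  hasBit_add_iff_of_dvd (pow2_succ i ▸ pow2_dvd_pow2 (succ_le_iff.2 h))

theorem exists_hasBit_pow2_iff {D : M → Prop} (hD : DefinablePred₁ arith D) (n : M) :
    ∃ y < pow2 n, ∀ i < n, (HasBit (pow2 i) y ↔ D i) := by
  have := definableOp₁_pow2 (M := M)
  have := definablePred₂_hasBit (M := M)
  induction n using pa_induction with
  | definable => exact definable
  | zero => exact ⟨0, zero_le.trans_lt (lt_pow2 0), fun i hi => (not_lt_zero hi).elim⟩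
  | succ n ih =>
    obtain ⟨y, hy, hbits⟩ := ih
    have lt_pow2_succ {z : M} (hz : z < pow2 n) : pow2 n + z < pow2 (n + 1) := by
      rw [pow2_succ, two_mul]; gcongr
    by_cases hn : D n
    · refine ⟨pow2 n + y, lt_pow2_succ hy, fun i hi => ?_⟩
      rcases (lt_succ_iff.1 hi).lt_or_eq with hi | rfl
      · rw [hasBit_pow2_add_of_lt hi, hbits i hi]
      · exact iff_of_true (hasBit_add_of_lt hy) hn
    · refine ⟨y, le_add_self.trans_lt (lt_pow2_succ hy), fun i hi => ?_⟩
      rcases (lt_succ_iff.1 hi).lt_or_eq with hi | rfl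
      · exact hbits i hi
      · exact iff_of_false (not_hasBit_of_lt hy) hn

end Bits

section StandardSystem

variable {M : Type*} [arith.Structure M] [Fact (IsPAModel M)]

theorem numeral_eq_natCast (n : ℕ) : numeral M n = n := by
  induction n with
  | zero => exact Nat.cast_zero.symm
  | succ n ih => rw [Nat.cast_succ, ← ih]; rfl

theorem isStd_of_le_natCast {x : M} {n : ℕ} (h : x ≤ n) : IsStd x := by
  induction n with
  | zero =>
    rw [Nat.cast_zero, nonpos_iff_eq_zero] at h
    exact ⟨0, by rw [h, numeral_eq_natCast, Nat.cast_zero]⟩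
  | succ n ih =>
    rw [Nat.cast_succ] at h
    rcases h.lt_or_eq with hlt | rfl
    · exact ih (lt_succ_iff.1 hlt)
    · exact ⟨n + 1, by rw [numeral_eq_natCast, Nat.cast_succ]⟩

theorem natCast_lt_of_not_isStd {a : M} (ha : ¬ IsStd a) (n : ℕ) : (n : M) < a :=
  lt_of_not_ge fun h => ha (isStd_of_le_natCast h)

theorem digitB_iff_hasBit {x : M} {i : ℕ} : digitB x i ↔ HasBit (pow2 (i : M)) x := by
  rw [HasBit, ← pow2_succ, ← Nat.cast_succ, pow2_natCast, pow2_natCast, ← numeral_eq_natCast,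
    ← numeral_eq_natCast]
  rfl

theorem setOf_natCast_mem_SSy {a : M} (ha : ¬ IsStd a) {D : M → Prop}
    (hD : DefinablePred₁ arith D) : {i : ℕ | D i} ∈ SSy M := by
  obtain ⟨y, -, hbits⟩ := exists_hasBit_pow2_iff hD a
  refine ⟨pow2 a + y, fun ⟨n, hn⟩ => ?_, fun i => ?_⟩
  · rw [numeral_eq_natCast] at hn
    exact ha (isStd_of_le_natCast ((lt_pow2 a).le.trans (le_self_add.trans hn.le)))
  · have hi := natCast_lt_of_not_isStd ha i
    rw [digitB_iff_hasBit, hasBit_pow2_add_of_lt hi, hbits _ hi, Set.mem_ofPred_eq]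

end StandardSystem

section Diagonalization

variable {N : Type*} [arith.Structure N] [Fact (IsPAModel N)]

theorem exists_natCast_le_two_mul {g : Set ℕ} (hg : g ∉ SSy N) {a : N} (ha : ¬ IsStd a)
    {f h : N → N} (hf : DefinableOp₁ arith f) {c : N} (hsum : ∀ i, c ≤ f i + h i) :
    ∃ i : ℕ, (i ∈ g ∧ c ≤ 2 * f i) ∨ (i ∉ g ∧ c ≤ 2 * h i) := by
  by_contra! hsmall
  suffices g = {i : ℕ | 2 * f i < c} from
    hg (this ▸ setOf_natCast_mem_SSy ha (D := fun i => 2 * f i < c) definable)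
  refine Set.ext fun i => ⟨(hsmall i).1, fun hlt => by_contra fun hi => ?_⟩
  have hlt' : 2 * f i + 2 * h i < c + c := add_lt_add hlt ((hsmall i).2 hi)
  have hle : c + c ≤ 2 * f i + 2 * h i :=
    calc c + c ≤ (f i + h i) + (f i + h i) := add_le_add (hsum i) (hsum i)
      _ = 2 * f i + 2 * h i := by ring
  exact hle.not_gt hlt'

theorem exists_internalCard_le_two_mul {g : Set ℕ} (hg : g ∉ SSy N) {a : N} (ha : ¬ IsStd a)
    {E : Set N} {c : N} (hE : InternalCard E c) {R S : N → N → Prop}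
    (hR : DefinablePred₂ arith R) (hS : DefinablePred₂ arith S)
    (hcover : ∀ i, ∀ e ∈ E, R i e ∨ S i e) :
    ∃ (i : ℕ) (c' : N), c ≤ 2 * c' ∧
      ((i ∈ g ∧ InternalCard {e ∈ E | R i e} c') ∨ (i ∉ g ∧ InternalCard {e ∈ E | S i e} c')) := by
  obtain ⟨f, hf, hbij⟩ := hE
  rw [definableFun₁_iff_definableOp₁] at hf
  obtain ⟨r, hr, hrcount⟩ := exists_isCounting (D := fun i x => R i (f x)) definable
  obtain ⟨s, hs, hscount⟩ := exists_isCounting (D := fun i x => S i (f x)) definable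
  have hri (i : N) : DefinableOp₁ arith (r i) := hr.comp (definableFun_const i) (.proj _)
  have hsi (i : N) : DefinableOp₁ arith (s i) := hs.comp (definableFun_const i) (.proj _)
  have hsum (i : N) : c ≤ r i c + s i c :=
    (hrcount i).le_add (hscount i) (hri i) (hsi i)
      (fun y hy => hcover i (f y) (hbij.mapsTo hy)) le_rfl
  obtain ⟨i, ⟨hi, hle⟩ | ⟨hi, hle⟩⟩ :=
    exists_natCast_le_two_mul (f := fun i => r i c) hg ha
      (hr.comp (.proj _) (definableFun_const c)) hsum
  · exact ⟨i, r i c, hle, .inl ⟨hi, internalCard_setOf_and definable hf hbij (hri i) (hrcount i)⟩⟩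
  · exact ⟨i, s i c, hle, .inr ⟨hi, internalCard_setOf_and definable hf hbij (hsi i) (hscount i)⟩⟩

variable {α : Type} [Finite α]

theorem exists_internalCard_image_digitB_ne {g : Set ℕ} (hg : g ∉ SSy N) {a : N}
    (ha : ¬ IsStd a) {P : (α → N) → Prop} (hP : DefinablePred arith P) {C t : (α → N) → N}
    (hC : Set.univ.DefinableFun arith C) (ht : Set.univ.DefinableFun arith t) {c : N}
    (hcard : InternalCard (C '' {b | P b}) c) :
    ∃ (i : ℕ) (c' : N), c ≤ 2 * c' ∧
      InternalCard (C '' {b | P b ∧ ¬ (i ∈ g ↔ digitB (t b) i)}) c' := by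
  have := definableOp₁_pow2 (M := N)
  have := definablePred₂_hasBit (M := N)
  have hfiber (Q : N → N → Prop) (i : N) : C '' {b | P b ∧ Q i (t b)} =
      {e ∈ C '' {b | P b} | ∃ b, (P b ∧ C b = e) ∧ Q i (t b)} := by
    aesop
  obtain ⟨i, c', hle, hi⟩ := exists_internalCard_le_two_mul hg ha hcard
    (definablePred₂_exists_fiber hP hC ht (Q := fun i y => ¬ HasBit (pow2 i) y) definable)
    (definablePred₂_exists_fiber hP hC ht (Q := fun i y => HasBit (pow2 i) y) definable)
    (by rintro i _ ⟨b, hb, rfl⟩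
        exact (em (HasBit (pow2 i) (t b))).symm.imp (⟨b, ⟨hb, rfl⟩, ·⟩) (⟨b, ⟨hb, rfl⟩, ·⟩))
  refine ⟨i, c', hle, ?_⟩
  rw [← hfiber fun i y => ¬ HasBit (pow2 i) y, ← hfiber fun i y => HasBit (pow2 i) y] at hi
  rcases hi with ⟨hi, hcard'⟩ | ⟨hi, hcard'⟩ <;>
    simpa only [digitB_iff_hasBit, hi, true_iff, false_iff, not_not] using hcard'

end Diagonalization

section Conditions

variable {N : Type*} [arith.Structure N] {n : ℕ}

theorem definablePred_realizesAll {fmls : Set (CFormula N n)} (hfin : fmls.Finite) :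
    DefinablePred arith fun b => RealizesAll fmls b := by
  lift fmls to Finset (CFormula N n) using hfin
  exact DefinablePred.congr (P := fun b => b ∈ ⋂ φ ∈ fmls, {b | φ.Realize b})
    (Set.definable_biInter_finset definablePred_realize fmls) fun b => by
      simp only [Set.mem_iInter, Set.mem_ofPred_eq, RealizesAll, Finset.mem_coe]

theorem realizesAll_insert {φ : CFormula N n} {fmls : Set (CFormula N n)}
    {b : (Fin n → Bool) → N} :
    RealizesAll (insert φ fmls) b ↔ RealizesAll fmls b ∧ φ.Realize b := by
  rw [RealizesAll, Set.forall_mem_insert, and_comm, RealizesAll]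

theorem realizationCodes_eq_image (d : N) (fmls : Set (CFormula N n)) :
    realizationCodes d fmls = tupleCode d '' {b | RealizesAll fmls b} :=
  Set.ext fun _ => exists_congr fun _ => and_congr_right' eq_comm

theorem reduct_self (φ : CFormula N n) : reduct le_rfl φ = φ :=
  (BoundedFormula.relabel_sumInl φ).trans (BoundedFormula.castLE_rfl _ φ)

/-- The largeness clause of `Condition`: the internal cardinality of the set of realizations of
`fmls` exceeds a positive rational multiple of the number of all tuples of elements below `d`. -/
def IsLarge (d : N) (fmls : Set (CFormula N n)) : Prop :=
  ∃ (u v : ℕ) (c : N), 0 < u ∧ 0 < v ∧ InternalCard (realizationCodes d fmls) c ∧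
    ltM (mulM (numeral N u) (powStd d (2 ^ n))) (mulM (numeral N v) c)

variable [Fact (IsPAModel N)]

theorem definableFun_tupleCode (d : N) :
    Set.univ.DefinableFun arith fun b : (Fin n → Bool) → N => tupleCode d b := by
  unfold tupleCode
  induction List.finRange (2 ^ n) with
  | nil => exact definableFun_const _
  | cons j l ih => exact definableFun_add (definableFun_mul (.proj _) (definableFun_const _)) ih

theorem IsLarge.exists_realizesAll {d : N} {fmls : Set (CFormula N n)} (h : IsLarge d fmls) :
    ∃ b, RealizesAll fmls b := by
  obtain ⟨u, v, c, -, -, ⟨f, -, hf⟩, hlt⟩ := h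
  have hc : (0 : N) < c := by
    refine pos_of_ne_zero fun h0 => ?_
    have hlt : _ < numeral N v * c := hlt
    exact pa_not_lt_zero _ (by rwa [h0, mul_zero] at hlt)
  obtain ⟨b, hb, -⟩ := hf.mapsTo hc
  exact ⟨b, hb⟩

theorem IsLarge.exists_insert_digitB_ne {d : N} {fmls : Set (CFormula N n)} (h : IsLarge d fmls)
    (hfin : fmls.Finite) {g : Set ℕ} (hg : g ∉ SSy N) {a : N} (ha : ¬ IsStd a)
    {t : ((Fin n → Bool) → N) → N} (ht : Set.univ.DefinableFun arith t) :
    ∃ (i : ℕ) (φ : CFormula N n),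
      IsLarge d (insert φ fmls) ∧ ∀ b, φ.Realize b → ¬ (i ∈ g ↔ digitB (t b) i) := by
  obtain ⟨u, v, c, hu, hv, hcard, hlt⟩ := h
  rw [realizationCodes_eq_image] at hcard
  obtain ⟨i, c', hle, hcard'⟩ := exists_internalCard_image_digitB_ne hg ha
    (definablePred_realizesAll hfin) (definableFun_tupleCode d) ht hcard
  have hdigit : DefinablePred arith fun b => digitB (t b) i :=
    (definablePred₂_hasBit.comp (definableFun_const _) ht).congr fun _ => digitB_iff_hasBit
  obtain ⟨φ, hφ⟩ := DefinablePred.exists_formula (P := fun b => ¬ (i ∈ g ↔ digitB (t b) i)) <| by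
    by_cases hi : i ∈ g
    · simpa only [hi, true_iff] using hdigit.not
    · simpa only [hi, false_iff, not_not] using hdigit
  refine ⟨i, φ, ⟨u, 2 * v, c', hu, by positivity, ?_, ?_⟩, fun b => (hφ b).1⟩
  · simpa only [realizationCodes_eq_image, realizesAll_insert, hφ] using hcard'
  · calc numeral N u * powStd d (2 ^ n) < numeral N v * c := hlt
      _ ≤ numeral N v * (2 * c') := by gcongr
      _ = numeral N (2 * v) * c' := by simp only [numeral_eq_natCast]; push_cast; ring

theorem IsLarge.exists_superset_digitB_ne {d : N} {fmls : Set (CFormula N n)}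
    (h : IsLarge d fmls) (hfin : fmls.Finite) {g : Set ℕ} (hg : g ∉ SSy N) {a : N}
    (ha : ¬ IsStd a) {ι : Type*} {t : ι → ((Fin n → Bool) → N) → N}
    (ht : ∀ j, Set.univ.DefinableFun arith (t j)) (s : Finset ι) :
    ∃ fmls' ⊇ fmls, fmls'.Finite ∧ IsLarge d fmls' ∧
      ∀ j ∈ s, ∃ i : ℕ, ∀ b, RealizesAll fmls' b → ¬ (i ∈ g ↔ digitB (t j b) i) := by
  induction s using Finset.cons_induction with
  | empty => exact ⟨fmls, subset_rfl, hfin, h, by simp⟩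
  | cons j s _ ih =>
    obtain ⟨fmls', hsub, hfin', hlarge, hs⟩ := ih
    obtain ⟨i, φ, hlarge', hφ⟩ := hlarge.exists_insert_digitB_ne hfin' hg ha (ht j)
    refine ⟨insert φ fmls', hsub.trans (Set.subset_insert _ _), hfin'.insert φ, hlarge', ?_⟩
    simp only [Finset.forall_mem_cons, realizesAll_insert]
    exact ⟨⟨i, fun b hb => hφ b hb.2⟩, fun j hj => (hs j hj).imp fun i hi b hb => hi b hb.1⟩

end Conditions

end Arith

open Arith in
theorem statement_10_general {N : Type*} [arith.Structure N] (hN : IsPAModel N) {a d : N}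
    (ha : ¬ IsStd a) {g : Set ℕ} (hg : g ∉ SSy N) (p : Condition N d) {k : ℕ}
    {F : (Fin k → N) → N} (hF : DefinableFun F) :
    ∃ q : Condition N d, CondLE q p ∧ q.n = p.n ∧
      ∀ σs : Fin k → Fin q.n → Bool,
        ∃ i : ℕ, ∀ b : (Fin q.n → Bool) → N, RealizesAll q.fmls b →
          ¬ ((i ∈ g) ↔ digitB (F fun j => b (σs j)) i) := by
  have : Fact (IsPAModel N) := ⟨hN⟩
  have hdef (σs : Fin k → Fin p.n → Bool) :
      Set.univ.DefinableFun arith fun b : (Fin p.n → Bool) → N => F fun j => b (σs j) :=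
    hF.definableFun_univ.comp (g := fun b j => b (σs j)) fun _ => .proj _
  obtain ⟨fmls, hsub, hfin, hlarge, hne⟩ :=
    IsLarge.exists_superset_digitB_ne p.large p.finite hg ha hdef Finset.univ
  exact ⟨⟨p.n, fmls, hfin, hlarge.exists_realizesAll,
    fun b hb => p.bounded b fun φ hφ => hb φ (hsub hφ), hlarge⟩,
    ⟨le_rfl, fun ψ hψ => hsub (reduct_self ψ ▸ hψ)⟩, rfl, fun σs => hne σs (Finset.mem_univ _)⟩

open Arith in
/-- For every `g ∉ SSy(N)`, every `N`-definable `F : N^k → N` and every condition `p`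
there is a condition `q ≤ p` with `n_q = n_p` such that every `(σ₁, …, σ_k) ∈ (2^{n_q})^k`
corresponds to an `i < ω` with `q ⊢ g(i) ≠ (F(x_{σ₁}, …, x_{σ_k}))_i`. -/
theorem statement_10 (N : Type*) [arith.Structure N] (hN : NonstandardModel N)
    (hNc : Countable N) (a d : N) (ha : ¬ IsStd a) (hd : IsPow2 a d)
    (g : Set ℕ) (hg : g ∉ SSy N)
    (p : Condition N d) (k : ℕ) (F : (Fin k → N) → N) (hF : DefinableFun F) :
    ∃ q : Condition N d, CondLE q p ∧ q.n = p.n ∧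
      ∀ σs : Fin k → Fin q.n → Bool,
        ∃ i : ℕ, ∀ b : (Fin q.n → Bool) → N, RealizesAll q.fmls b →
          ¬ ((i ∈ g) ↔ digitB (F fun j => b (σs j)) i) :=
  statement_10_general hN.1 ha hg p hF
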